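/- Let h : ℝⁿ → ℝ be a nonnegative measurable function, and suppose there exists C₀ ≥ 1 such that ∫_{B_ρ} h(X) dX ≤ C₀ ρ² for every ρ ≥ C₀. Then there exist C₁ > 0 and R₀ > 0 such that ∫_{A_{√R,R}} h(X)/|X|² dX ≤ C₁ log R for every R ≥ R₀, where A_{√R,R} := {X ∈ ℝⁿ : √R ≤ |X| ≤ R}. -/

import Mathlib

open MeasureTheory Real

noncomputable section

/-!
Cut the annulus into dyadic shells `r ≤ |X| < 2r`. On such a shell `|X|⁻² ≤ r⁻²`, while the growth
bound on the ball of radius `2r` gives `∫ h ≤ C₀(2r)²`; the two powers of `r` cancel, so every shell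
contributes at most `4C₀`, whatever its radius. The annulus `√R ≤ |X| ≤ R` is covered by about
`log₂ √R` shells.
-/

theorem logb_two_sqrt_add_one_le_two_mul_log {R : ℝ} (hR : exp 1 ≤ R) :
    logb 2 √R + 1 ≤ 2 * log R := by
  have hlog : 1 ≤ log R := (le_log_iff_exp_le ((exp_pos 1).trans_le hR)).2 hR
  rw [logb, log_sqrt ((exp_pos 1).le.trans hR), ← le_sub_iff_add_le,
    div_le_iff₀ (log_pos one_lt_two)]
  nlinarith [log_two_gt_d9]

section GrowthOnBalls

open Metric Set
open scoped ENNReal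

variable {α : Type*} [PseudoMetricSpace α] [MeasurableSpace α] [OpensMeasurableSpace α]
  {μ : Measure α} {x : α} {p : ℝ} {f : α → ℝ≥0∞} {C : ℝ≥0∞} {r R : ℝ}

theorem setLIntegral_shell_div_dist_rpow_le (hp : 0 ≤ p) (hr : 0 < r)
    (hf : ∫⁻ y in ball x (2 * r), f y ∂μ ≤ C * ENNReal.ofReal ((2 * r) ^ p)) :
    ∫⁻ y in {y | r ≤ dist y x ∧ dist y x < 2 * r}, f y / ENNReal.ofReal (dist y x ^ p) ∂μ
      ≤ C * ENNReal.ofReal (2 ^ p) := by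
  have hrp : 0 < r ^ p := rpow_pos_of_pos hr p
  have hmeas : MeasurableSet {y | r ≤ dist y x ∧ dist y x < 2 * r} :=
    measurableSet_Ico.preimage (by fun_prop : Measurable fun y => dist y x)
  calc ∫⁻ y in {y | r ≤ dist y x ∧ dist y x < 2 * r}, f y / ENNReal.ofReal (dist y x ^ p) ∂μ
      ≤ ∫⁻ y in {y | r ≤ dist y x ∧ dist y x < 2 * r}, f y / ENNReal.ofReal (r ^ p) ∂μ := by
        refine setLIntegral_mono' hmeas fun y hy => ?_
        have hry : r ≤ dist y x := hy.1
        gcongr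
    _ ≤ ∫⁻ y in ball x (2 * r), f y / ENNReal.ofReal (r ^ p) ∂μ :=
        lintegral_mono_set fun _ hy => hy.2
    _ = (∫⁻ y in ball x (2 * r), f y ∂μ) / ENNReal.ofReal (r ^ p) := by
        simp only [div_eq_mul_inv]
        exact lintegral_mul_const' _ _ (ENNReal.inv_ne_top.2 (ENNReal.ofReal_pos.2 hrp).ne')
    _ ≤ C * ENNReal.ofReal ((2 * r) ^ p) / ENNReal.ofReal (r ^ p) := by gcongr
    _ = C * ENNReal.ofReal (2 ^ p) := by
        rw [mul_div_assoc, ← ENNReal.ofReal_div_of_pos hrp, mul_rpow zero_le_two hr.le,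
          mul_div_cancel_right₀ _ hrp.ne']

theorem setLIntegral_dyadic_annulus_div_dist_rpow_le (hp : 0 ≤ p) (hr : 0 < r)
    (hf : ∀ ρ ≥ r, ∫⁻ y in ball x ρ, f y ∂μ ≤ C * ENNReal.ofReal (ρ ^ p)) (N : ℕ) :
    ∫⁻ y in {y | r ≤ dist y x ∧ dist y x < 2 ^ N * r}, f y / ENNReal.ofReal (dist y x ^ p) ∂μ
      ≤ N * (C * ENNReal.ofReal (2 ^ p)) := by
  induction N with
  | zero =>
    have hempty : {y | r ≤ dist y x ∧ dist y x < 2 ^ 0 * r} = ∅ := by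
      ext y
      simp
    rw [hempty, setLIntegral_empty]
    exact zero_le
  | succ N ih =>
    have hle : r ≤ 2 ^ N * r := le_mul_of_one_le_left hr.le (one_le_pow₀ one_le_two)
    have hcover : {y | r ≤ dist y x ∧ dist y x < 2 ^ (N + 1) * r} ⊆
        {y | r ≤ dist y x ∧ dist y x < 2 ^ N * r} ∪
          {y | 2 ^ N * r ≤ dist y x ∧ dist y x < 2 * (2 ^ N * r)} := by
      rintro y ⟨hry, hyr⟩
      rw [pow_succ', mul_assoc] at hyr
      exact (lt_or_ge (dist y x) (2 ^ N * r)).imp (⟨hry, ·⟩) (⟨·, hyr⟩)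
    have hshell := setLIntegral_shell_div_dist_rpow_le hp (hr.trans_le hle)
      (hf (2 * (2 ^ N * r)) (by linarith))
    calc _ ≤ _ := (lintegral_mono_set hcover).trans (lintegral_union_le _ _ _)
      _ ≤ N * (C * ENNReal.ofReal (2 ^ p)) + C * ENNReal.ofReal (2 ^ p) := add_le_add ih hshell
      _ = (N + 1 : ℕ) * (C * ENNReal.ofReal (2 ^ p)) := by rw [Nat.cast_succ, add_one_mul]

theorem setLIntegral_annulus_div_dist_rpow_le (hp : 0 ≤ p) (hr : 0 < r) (hrR : r ≤ R)
    (hf : ∀ ρ ≥ r, ∫⁻ y in ball x ρ, f y ∂μ ≤ C * ENNReal.ofReal (ρ ^ p)) :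
    ∫⁻ y in {y | r ≤ dist y x ∧ dist y x ≤ R}, f y / ENNReal.ofReal (dist y x ^ p) ∂μ
      ≤ ENNReal.ofReal (logb 2 (R / r) + 1) * (C * ENNReal.ofReal (2 ^ p)) := by
  obtain ⟨m, hmR, hRm⟩ := exists_nat_pow_near ((one_le_div hr).2 hrR) one_lt_two
  have hm : (m : ℝ) ≤ logb 2 (R / r) := by
    rwa [le_logb_iff_rpow_le one_lt_two (div_pos (hr.trans_le hrR) hr), rpow_natCast]
  have hcover : {y | r ≤ dist y x ∧ dist y x ≤ R} ⊆
      {y | r ≤ dist y x ∧ dist y x < 2 ^ (m + 1) * r} :=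
    fun _ hy => ⟨hy.1, hy.2.trans_lt ((div_lt_iff₀ hr).1 hRm)⟩
  calc _ ≤ _ := lintegral_mono_set hcover
    _ ≤ (m + 1 : ℕ) * (C * ENNReal.ofReal (2 ^ p)) :=
        setLIntegral_dyadic_annulus_div_dist_rpow_le hp hr hf (m + 1)
    _ ≤ ENNReal.ofReal (logb 2 (R / r) + 1) * (C * ENNReal.ofReal (2 ^ p)) := by
        rw [← ENNReal.ofReal_natCast, Nat.cast_succ]
        gcongr

theorem annulus_log_estimate_general {h : α → ℝ} {C₀ r₀ : ℝ} (hp : 0 ≤ p) (hC₀ : 0 < C₀)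
    (hbound : ∀ ρ ≥ r₀,
      ∫⁻ y in ball x ρ, ENNReal.ofReal (h y) ∂μ ≤ ENNReal.ofReal (C₀ * ρ ^ p)) :
    ∃ C₁ > (0 : ℝ), ∃ R₀ > (0 : ℝ), ∀ R ≥ R₀,
      ∫⁻ y in {y | √R ≤ dist y x ∧ dist y x ≤ R}, ENNReal.ofReal (h y / dist y x ^ p) ∂μ
        ≤ ENNReal.ofReal (C₁ * log R) := by
  refine ⟨2 * (C₀ * 2 ^ p), by positivity, max (exp 1) (r₀ ^ 2), by positivity, fun R hR => ?_⟩
  obtain ⟨heR, hr₀R⟩ := max_le_iff.1 hR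
  have hR1 : 1 ≤ R := (one_le_exp zero_le_one).trans heR
  have hgrowth : ∀ ρ ≥ √R,
      ∫⁻ y in ball x ρ, ENNReal.ofReal (h y) ∂μ ≤ ENNReal.ofReal C₀ * ENNReal.ofReal (ρ ^ p) :=
    fun ρ hρ => (hbound ρ ((le_sqrt_of_sq_le hr₀R).trans hρ)).trans_eq (ENNReal.ofReal_mul hC₀.le)
  calc ∫⁻ y in {y | √R ≤ dist y x ∧ dist y x ≤ R}, ENNReal.ofReal (h y / dist y x ^ p) ∂μ
      ≤ ∫⁻ y in {y | √R ≤ dist y x ∧ dist y x ≤ R},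
          ENNReal.ofReal (h y) / ENNReal.ofReal (dist y x ^ p) ∂μ :=
        -- Where `dist y x = 0` the real quotient is `0`, the extended one possibly `∞`: only `≤`.
        lintegral_mono fun y => ENNReal.ofReal_div_le (by positivity)
    _ ≤ ENNReal.ofReal (logb 2 (R / √R) + 1) * (ENNReal.ofReal C₀ * ENNReal.ofReal (2 ^ p)) :=
        setLIntegral_annulus_div_dist_rpow_le hp (by positivity) (sqrt_le_self_iff.2 (.inr hR1))
          hgrowth
    _ ≤ ENNReal.ofReal (2 * log R) * (ENNReal.ofReal C₀ * ENNReal.ofReal (2 ^ p)) := by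
        gcongr
        exact div_sqrt.symm ▸ logb_two_sqrt_add_one_le_two_mul_log heR
    _ = ENNReal.ofReal (2 * (C₀ * 2 ^ p) * log R) := by
        rw [← ENNReal.ofReal_mul hC₀.le, ← ENNReal.ofReal_mul' (by positivity), mul_right_comm]

end GrowthOnBalls

/-- if `h : ℝⁿ → ℝ` is nonnegative and measurable with
`∫_{B_ρ} h ≤ C₀ρ²` for every `ρ ≥ C₀` (for some `C₀ ≥ 1`), then there are `C₁ > 0` and
`R₀ > 0` such that `∫_{A_{√R,R}} h(X)/|X|² dX ≤ C₁ log R` for every `R ≥ R₀`. -/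
theorem annulus_log_estimate (n : ℕ)
    (h : EuclideanSpace ℝ (Fin n) → ℝ) (hmeas : Measurable h) (hpos : ∀ X, 0 ≤ h X)
    (C₀ : ℝ) (hC₀ : 1 ≤ C₀)
    (hbound : ∀ ρ ≥ C₀,
      ∫⁻ X in Metric.ball (0 : EuclideanSpace ℝ (Fin n)) ρ, ENNReal.ofReal (h X)
        ≤ ENNReal.ofReal (C₀ * ρ ^ 2)) :
    ∃ C₁ > (0 : ℝ), ∃ R₀ > (0 : ℝ), ∀ R ≥ R₀,
      ∫⁻ X in {X : EuclideanSpace ℝ (Fin n) | Real.sqrt R ≤ ‖X‖ ∧ ‖X‖ ≤ R},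
          ENNReal.ofReal (h X / ‖X‖ ^ 2)
        ≤ ENNReal.ofReal (C₁ * Real.log R) := by
  simpa only [dist_zero_right, rpow_two] using
    annulus_log_estimate_general (μ := volume) (x := 0) (p := 2) (h := h) zero_le_two
      (zero_lt_one.trans_le hC₀) (by simpa only [rpow_two] using hbound)
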